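/- Let n be a positive integer, let σ be a decorated permutation of order n, and let a < b be integers with b ≤ σ(a) < σ(b) ≤ a + n. Then σ ∘ t_{a,b} is again a decorated permutation of order n, and ∑_{i=1}^n ((σ ∘ t_{a,b})(i) − i) = ∑_{i=1}^n (σ(i) − i). -/

import Mathlib

/-- A decorated permutation of order `n`: a bijection `σ : ℤ → ℤ` with
`σ (i + n) = σ i + n` and `i ≤ σ i ≤ i + n` for all `i`. -/
def IsDecoratedPerm (n : ℤ) (σ : ℤ → ℤ) : Prop :=
  Function.Bijective σ ∧ (∀ i : ℤ, σ (i + n) = σ i + n) ∧ ∀ i : ℤ, i ≤ σ i ∧ σ i ≤ i + n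

/-- The affine transposition `t_{a,b}`: swaps `a + m*n` and `b + m*n` for every `m : ℤ`
and fixes all integers not congruent to `a` or `b` modulo `n`. -/
def affT (n a b : ℤ) (i : ℤ) : ℤ :=
  if (i - a) % n = 0 then i + (b - a)
  else if (i - b) % n = 0 then i - (b - a)
  else i

theorem affT_cases (n a b : ℤ) (hab : a < b) (hb : b < a + n) (i : ℤ) :
    (∃ m : ℤ, i = a + m * n) ∨ (∃ m : ℤ, i = b + m * n) ∨
      ((i - a) % n ≠ 0 ∧ (i - b) % n ≠ 0) := by
  by_cases h : (i - a) % n = 0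
  · obtain ⟨m, hm⟩ := Int.dvd_of_emod_eq_zero h
    exact Or.inl ⟨m, by linarith [mul_comm m n]⟩
  · by_cases h' : (i - b) % n = 0
    · obtain ⟨m, hm⟩ := Int.dvd_of_emod_eq_zero h'
      exact Or.inr (Or.inl ⟨m, by linarith [mul_comm m n]⟩)
    · exact Or.inr (Or.inr ⟨h, h'⟩)

theorem affT_a (n a b m : ℤ) : affT n a b (a + m * n) = b + m * n := by
  have : (a + m * n - a) % n = 0 := by simp
  rw [affT, if_pos this]; ring

theorem affT_nb (n a b m : ℤ) (hab : a < b) (hb : b < a + n) :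
    (b + m * n - a) % n ≠ 0 := by
  have e : b + m * n - a = (b - a) + m * n := by ring
  rw [e, Int.add_mul_emod_self_right, Int.emod_eq_of_lt (by omega) (by omega)]
  omega

theorem affT_b (n a b m : ℤ) (hab : a < b) (hb : b < a + n) :
    affT n a b (b + m * n) = a + m * n := by
  have : (b + m * n - b) % n = 0 := by simp
  rw [affT, if_neg (affT_nb n a b m hab hb), if_pos this]; ring

theorem affT_o (n a b i : ℤ) (h : (i - a) % n ≠ 0) (h' : (i - b) % n ≠ 0) :
    affT n a b i = i := by
  rw [affT, if_neg h, if_neg h']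

theorem affT_invol (n a b : ℤ) (hab : a < b) (hb : b < a + n) :
    Function.Involutive (affT n a b) := by
  intro i
  rcases affT_cases n a b hab hb i with ⟨m, rfl⟩ | ⟨m, rfl⟩ | ⟨h, h'⟩
  · rw [affT_a, affT_b _ _ _ _ hab hb]
  · rw [affT_b _ _ _ _ hab hb, affT_a]
  · rw [affT_o _ _ _ _ h h', affT_o _ _ _ _ h h']

theorem affT_add (n a b i : ℤ) : affT n a b (i + n) = affT n a b i + n := by
  have e1 : (i + n - a) % n = (i - a) % n := by
    rw [show i + n - a = i - a + n by ring, Int.add_emod_right]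
  have e2 : (i + n - b) % n = (i - b) % n := by
    rw [show i + n - b = i - b + n by ring, Int.add_emod_right]
  unfold affT
  rw [e1, e2]
  split_ifs <;> ring

theorem sum_residue (n : ℤ) (hn : 0 < n) (a d : ℤ) :
    ∑ i ∈ Finset.Icc (1 : ℤ) n, (if (i - a) % n = 0 then d else 0) = d := by
  have h0 := Int.emod_nonneg (a - 1) hn.ne'
  have h1 := Int.emod_lt_of_pos (a - 1) hn
  have key : ∀ i ∈ Finset.Icc (1 : ℤ) n,
      (if (i - a) % n = 0 then d else 0) = if i = (a - 1) % n + 1 then d else 0 := by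
    intro i hi
    rw [Finset.mem_Icc] at hi
    have : (i - a) % n = 0 ↔ i = (a - 1) % n + 1 := by
      rw [show i - a = (i - 1) - (a - 1) by ring, ← Int.emod_eq_emod_iff_emod_sub_eq_zero,
        Int.emod_eq_of_lt (a := i - 1) (by omega) (by omega)]
      omega
    simp only [this]
  rw [Finset.sum_congr rfl key, Finset.sum_ite_eq', if_pos]
  rw [Finset.mem_Icc]; omega

/-- If `a < b` and `b ≤ σ a < σ b ≤ a + n`, then `σ ∘ t_{a,b}` is a
decorated permutation of order `n` and `∑_{i=1}^n ((σ ∘ t_{a,b}) i - i) = ∑_{i=1}^n (σ i - i)`. -/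
theorem boundary_transposition_decorated_and_sum (n : ℤ) (hn : 0 < n) (σ : ℤ → ℤ)
    (hσ : IsDecoratedPerm n σ) (a b : ℤ) (hab : a < b)
    (h1 : b ≤ σ a) (h2 : σ a < σ b) (h3 : σ b ≤ a + n) :
    IsDecoratedPerm n (σ ∘ affT n a b) ∧
      ∑ i ∈ Finset.Icc (1 : ℤ) n, ((σ ∘ affT n a b) i - i)
        = ∑ i ∈ Finset.Icc (1 : ℤ) n, (σ i - i) := by
  obtain ⟨hbij, hadd, hbd⟩ := hσ
  have hb : b < a + n := by omega
  have hper : ∀ i m : ℤ, σ (i + m * n) = σ i + m * n := by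
    intro i m
    induction m using Int.induction_on with
    | zero => simp
    | succ k ih =>
      rw [show i + ((k : ℤ) + 1) * n = i + k * n + n by ring, hadd, ih]; ring
    | pred k ih =>
      have := hadd (i + (-(k : ℤ) - 1) * n)
      rw [show i + (-(k : ℤ) - 1) * n + n = i + -k * n by ring, ih] at this
      linarith
  refine ⟨⟨hbij.comp (affT_invol n a b hab hb).bijective, ?_, ?_⟩, ?_⟩
  · intro i
    simp only [Function.comp, affT_add, hadd]
  · intro i
    simp only [Function.comp]
    rcases affT_cases n a b hab hb i with ⟨m, rfl⟩ | ⟨m, rfl⟩ | ⟨h, h'⟩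
    · rw [affT_a, hper]; constructor <;> linarith
    · rw [affT_b _ _ _ _ hab hb, hper]; constructor <;> linarith
    · rw [affT_o _ _ _ _ h h']; exact hbd i
  · have key : ∀ i ∈ Finset.Icc (1 : ℤ) n, (σ ∘ affT n a b) i - i =
        (σ i - i) + ((if (i - a) % n = 0 then σ b - σ a else 0)
          - (if (i - b) % n = 0 then σ b - σ a else 0)) := by
      intro i _
      simp only [Function.comp]
      rcases affT_cases n a b hab hb i with ⟨m, rfl⟩ | ⟨m, rfl⟩ | ⟨h, h'⟩
      · have e1 : (a + m * n - a) % n = 0 := by simp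
        have e2 : (a + m * n - b) % n ≠ 0 := by
          intro h
          apply affT_nb n a b (-m) hab hb
          rw [← Int.dvd_iff_emod_eq_zero] at h ⊢
          rw [show b + -m * n - a = -(a + m * n - b) by ring]
          exact h.neg_right
        rw [affT_a, hper, hper, if_pos e1, if_neg e2]; ring
      · have e1 : (b + m * n - b) % n = 0 := by simp
        rw [affT_b _ _ _ _ hab hb, hper, hper, if_pos e1, if_neg (affT_nb n a b m hab hb)]; ring
      · rw [affT_o _ _ _ _ h h', if_neg h, if_neg h']; ring
    rw [Finset.sum_congr rfl key, Finset.sum_add_distrib, Finset.sum_sub_distrib, Finset.sum_sub_distrib,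
      sum_residue n hn, sum_residue n hn]
    ring
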